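/- Let K be a field with more than 2 elements, E a finite-dimensional K-vector space, and q a quadratic form on E. Assume there exist a linear hyperplane H of E and two linear subspaces P₁ and P₂ of codimension 2 in E such that q(x) = 0 for every x ∈ E \ (H ∪ P₁ ∪ P₂). Then q = 0. -/

import Mathlib

theorem aux_avoid {K E : Type*} [Field K] [AddCommGroup E] [Module K E]
    (W A B : Submodule K E) (hA : ¬ W ≤ A) (hB : ¬ W ≤ B) : ∃ w ∈ W, w ∉ A ∧ w ∉ B := by
  obtain ⟨u, hu, huA⟩ := SetLike.not_le_iff_exists.1 hA
  obtain ⟨v, hv, hvB⟩ := SetLike.not_le_iff_exists.1 hB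
  by_cases huB : u ∈ B
  · by_cases hvA : v ∈ A
    · refine ⟨u + v, W.add_mem hu hv, ?_, ?_⟩
      · rwa [Submodule.add_mem_iff_left _ hvA]
      · rwa [Submodule.add_mem_iff_right _ huB]
    · exact ⟨v, hv, hvA, hvB⟩
  · exact ⟨u, hu, huA, huB⟩

theorem aux_expand {K E : Type*} [Field K] [AddCommGroup E] [Module K E]
    (q : QuadraticForm K E) (x h : E) (t : K) :
    q (x + t • h) = q x + t * QuadraticMap.polar q x h + t * t * q h := by
  rw [QuadraticMap.map_add q, QuadraticMap.map_smul, QuadraticMap.polar_smul_right]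
  simp only [smul_eq_mul]
  ring

theorem aux_rank {K E : Type*} [Field K] [AddCommGroup E] [Module K E] [FiniteDimensional K E]
    (P : Submodule K E) (y : E) (hy : y ∉ P) :
    Module.finrank K (P ⊔ K ∙ y : Submodule K E) = Module.finrank K P + 1 := by
  have h1 := Submodule.finrank_add_le_finrank_add_finrank P (K ∙ y)
  have hy0 : y ≠ 0 := fun h => hy (h ▸ P.zero_mem)
  rw [finrank_span_singleton hy0] at h1
  have h2 : P < P ⊔ K ∙ y := by
    refine lt_of_le_of_ne le_sup_left fun h => hy ?_
    rw [h]
    exact Submodule.mem_sup_right (Submodule.mem_span_singleton_self y)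
  have := Submodule.finrank_lt_finrank_of_lt h2
  omega

theorem aux_notle {K E : Type*} [Field K] [AddCommGroup E] [Module K E] [FiniteDimensional K E]
    (H R : Submodule K E) (x : E) (hxH : x ∉ H) (hxR : x ∈ R)
    (h : Module.finrank K R ≤ Module.finrank K H) : ¬ H ≤ R := by
  intro hle
  rw [← Submodule.eq_of_le_of_finrank_le hle h] at hxR
  exact hxH hxR

theorem aux_R {K E : Type*} [Field K] [AddCommGroup E] [Module K E] [FiniteDimensional K E]
    (P : Submodule K E) (x : E) (hP : Module.finrank K P + 2 = Module.finrank K E) :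
    ∃ R : Submodule K E, P ≤ R ∧ x ∈ R ∧ Module.finrank K R + 1 = Module.finrank K E := by
  by_cases hx : x ∈ P
  · obtain ⟨y, hy⟩ : ∃ y, y ∉ P := by
      by_contra! hc
      have : P = ⊤ := by ext z; simp [hc z]
      rw [this, finrank_top] at hP
      omega
    exact ⟨P ⊔ K ∙ y, le_sup_left, Submodule.mem_sup_left hx, by rw [aux_rank P y hy]; omega⟩
  · exact ⟨P ⊔ K ∙ x, le_sup_left,
      Submodule.mem_sup_right (Submodule.mem_span_singleton_self x), by
        rw [aux_rank P x hx]; omega⟩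

theorem aux_sum {K E : Type*} [Field K] [AddCommGroup E] [Module K E]
    (P : Submodule K E) (x h : E) (t : K) (ht : t ≠ 0) (hx : x ∈ P) (hh : h ∉ P) :
    x + t • h ∉ P := by
  rwa [Submodule.add_mem_iff_right _ hx, Submodule.smul_mem_iff _ ht]

theorem aux_main {K E : Type*} [Field K] [AddCommGroup E] [Module K E] [FiniteDimensional K E]
    (a : K) (ha0 : a ≠ 0) (ha1 : a ≠ 1)
    (q : QuadraticForm K E)
    (H P₁ P₂ : Submodule K E)
    (hH : Module.finrank K H + 1 = Module.finrank K E)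
    (hP₁ : Module.finrank K P₁ + 2 = Module.finrank K E)
    (hP₂ : Module.finrank K P₂ + 2 = Module.finrank K E)
    (hq : ∀ x : E, x ∉ H → x ∉ P₁ → x ∉ P₂ → q x = 0)
    (x : E) (hxH : x ∉ H) (hx₁ : x ∈ P₁) : q x = 0 := by
  obtain ⟨R, hPR, hxR, hR⟩ := aux_R P₂ x hP₂
  have hHP : ¬ H ≤ P₁ := aux_notle H P₁ x hxH hx₁ (by omega)
  have hHR : ¬ H ≤ R := aux_notle H R x hxH hxR (by omega)
  have offH : ∀ h ∈ H, ∀ t : K, x + t • h ∉ H := fun h hh t => by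
    rwa [Submodule.add_mem_iff_left _ (H.smul_mem t hh)]
  have good : ∀ h ∈ H, h ∉ P₁ → h ∉ R → ∀ t : K, t ≠ 0 →
      q x + t * QuadraticMap.polar q x h + t * t * q h = 0 := by
    intro h hh h1 h2 t ht
    rw [← aux_expand]
    exact hq _ (offH h hh t) (aux_sum P₁ x h t ht hx₁ h1)
      (fun hc => aux_sum R x h t ht hxR h2 (hPR hc))
  by_cases h2 : (2 : K) = 0
  · obtain ⟨h, hh, h1, hhR⟩ := aux_avoid H P₁ R hHP hHR
    have e1 := good h hh h1 hhR 1 one_ne_zero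
    have e2 := good h hh h1 hhR a ha0
    have e3 := good h hh h1 hhR (1 + a) (fun hc => ha1 (by linear_combination hc - h2))
    linear_combination e1 + e2 - e3 + a * q h * h2
  · have good2 : ∀ h ∈ H, h ∉ P₁ → h ∉ R → QuadraticMap.polar q x h = 0 ∧ q h = - q x := by
      intro h hh h1 hhR
      have e1 := good h hh h1 hhR 1 one_ne_zero
      have e2 := good h hh h1 hhR (-1) (neg_ne_zero.2 one_ne_zero)
      constructor
      · apply mul_left_cancel₀ h2
        linear_combination e1 - e2
      · apply mul_left_cancel₀ h2
        linear_combination e1 + e2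
    have hdim : Module.finrank K E ≤ Module.finrank K (R ⊓ H : Submodule K E) + 2 := by
      have h3 := Submodule.finrank_sup_add_finrank_inf_eq R H
      have h4 := Submodule.finrank_le (R ⊔ H)
      omega
    have key : ∀ P : Submodule K E, x ∈ P → Module.finrank K P + 2 = Module.finrank K E →
        ¬ R ⊓ H ≤ P := fun P hxP hP =>
      aux_notle _ P x (fun hc => hxH hc.2) hxP (by omega)
    -- find the special direction
    obtain ⟨k, hkR, hkH, hk1, hk2⟩ : ∃ k, k ∈ R ∧ k ∈ H ∧ k ∉ P₁ ∧ x + k ∉ P₂ := by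
      by_cases hx₂ : x ∈ P₂
      · obtain ⟨k, hk, hk1, hk2⟩ := aux_avoid (R ⊓ H) P₁ P₂ (key P₁ hx₁ hP₁) (key P₂ hx₂ hP₂)
        exact ⟨k, hk.1, hk.2, hk1, by rwa [Submodule.add_mem_iff_right _ hx₂]⟩
      · obtain ⟨k, hk, hk1⟩ := SetLike.not_le_iff_exists.1 (key P₁ hx₁ hP₁)
        by_cases hc : x + k ∈ P₂
        · refine ⟨-k, R.neg_mem hk.1, H.neg_mem hk.2, by simpa using hk1, fun hc2 => hx₂ ?_⟩
          have := P₂.add_mem hc hc2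
          rw [← Submodule.smul_mem_iff P₂ h2]
          convert this using 1
          rw [two_smul]; abel
        · exact ⟨k, hk.1, hk.2, hk1, hc⟩
    have hqk : q (x + k) = 0 := hq _ (by simpa using offH k hkH 1)
      (by rwa [Submodule.add_mem_iff_right _ hx₁]) hk2
    obtain ⟨h, hh, hhS, hhR⟩ := aux_avoid H (P₁ ⊔ K ∙ k) R
      (aux_notle H _ x hxH (Submodule.mem_sup_left hx₁) (by rw [aux_rank P₁ k hk1]; omega)) hHR
    have hline : ∀ t : K, QuadraticMap.polar q x (h + t • k) = 0 ∧ q (h + t • k) = - q x := by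
      intro t
      refine good2 _ (H.add_mem hh (H.smul_mem t hkH)) (fun hc => hhS ?_) ?_
      · have hkS : k ∈ P₁ ⊔ K ∙ k :=
          Submodule.mem_sup_right (Submodule.mem_span_singleton_self k)
        rw [← Submodule.add_mem_iff_left _ (Submodule.smul_mem _ t hkS)]
        exact Submodule.mem_sup_left hc
      · rwa [Submodule.add_mem_iff_left _ (R.smul_mem t hkR)]
    have p0 := (hline 0).1
    have p1 := (hline 1).1
    have q0 := (hline 0).2
    have q1 := (hline 1).2
    have q2 := (hline (-1)).2
    rw [aux_expand] at q0 q1 q2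
    rw [QuadraticMap.polar_add_right, QuadraticMap.polar_smul_right, smul_eq_mul] at p0 p1
    have f1 : QuadraticMap.polar q x k = 0 := by linear_combination p1 - p0
    have f2 : q k = 0 := by
      apply mul_left_cancel₀ h2
      linear_combination q1 + q2 - 2 * q0
    rw [QuadraticMap.map_add q, f1, f2] at hqk
    simpa using hqk

/-- Let `K` be a field with more than 2 elements, `E` a
finite-dimensional `K`-vector space and `q` a quadratic form on `E`. Assume there are a
linear hyperplane `H` of `E` (`dim H + 1 = dim E`) and two linear subspaces `P₁`, `P₂`
of codimension 2 (`dim Pᵢ + 2 = dim E`) such that `q` vanishes on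
`E \ (H ∪ P₁ ∪ P₂)`. Then `q = 0`. -/
theorem quadratic_form_eq_zero_of_vanishing_off_hyperplane_and_two_codim_two
    (K E : Type*) [Field K] (hK : 2 < Cardinal.mk K)
    [AddCommGroup E] [Module K E] [FiniteDimensional K E]
    (q : QuadraticForm K E)
    (H P₁ P₂ : Submodule K E)
    (hH : Module.finrank K H + 1 = Module.finrank K E)
    (hP₁ : Module.finrank K P₁ + 2 = Module.finrank K E)
    (hP₂ : Module.finrank K P₂ + 2 = Module.finrank K E)
    (hq : ∀ x : E, x ∉ H → x ∉ P₁ → x ∉ P₂ → q x = 0) :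
    q = 0 := by

  obtain ⟨a, ha0, ha1⟩ : ∃ a : K, a ≠ 0 ∧ a ≠ 1 := by
    by_contra! hc
    have hs : (Set.univ : Set K) ⊆ {0, 1} := by
      intro z _
      by_cases hz : z = 0
      · simp [hz]
      · simp [hc z hz]
    have h1 := Cardinal.mk_le_mk_of_subset hs
    rw [Cardinal.mk_univ] at h1
    have h2 : Cardinal.mk ({0, 1} : Set K) ≤ 2 := by
      refine Cardinal.mk_insert_le.trans ?_
      rw [Cardinal.mk_singleton, one_add_one_eq_two]
    exact absurd hK (not_lt.2 (h1.trans h2))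
  have hoff : ∀ x, x ∉ H → q x = 0 := by
    intro x hx
    by_cases h1 : x ∈ P₁
    · exact aux_main a ha0 ha1 q H P₁ P₂ hH hP₁ hP₂ hq x hx h1
    by_cases h2 : x ∈ P₂
    · exact aux_main a ha0 ha1 q H P₂ P₁ hH hP₂ hP₁ (fun x h h1 h2 => hq x h h2 h1) x hx h2
    exact hq x hx h1 h2
  obtain ⟨x, hx⟩ : ∃ x, x ∉ H := by
    by_contra! hc
    have : H = ⊤ := by ext z; simp [hc z]
    rw [this, finrank_top] at hH
    omega
  ext h
  by_cases hh : h ∈ H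
  · have e : ∀ t : K, q x + t * QuadraticMap.polar q x h + t * t * q h = 0 := fun t => by
      rw [← aux_expand]
      exact hoff _ (by rwa [Submodule.add_mem_iff_left _ (H.smul_mem t hh)])
    have e0 := hoff x hx
    have e1 := e 1
    have e2 := e a
    have e3 : a * (a - 1) * q h = 0 := by linear_combination e2 - a * e1 - (1 - a) * e0
    simpa [ha0, sub_ne_zero.2 ha1] using e3
  · simpa using hoff h hh
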